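/- arXiv:1604.03756 — 4 statements merged into one kernel-verified Lean document; each statement's English description precedes it below -/
import Mathlib

section
/- Let U ∈ M_n(ℂ) be a unitary matrix, and for (i,a),(j,b) ∈ H×Ĥ let P_{(ia),(jb)} denote the orthogonal projection of the Hilbert space M_n(ℂ) onto the complex line spanned by W_{ia} U (W_{jb})*. Then the array (P_{(ia),(jb)}) indexed by H×Ĥ is a magic unitary of rank-one projections: each P_{(ia),(jb)} is a rank-one orthogonal projection, for each fixed (i,a) the sum over all (j,b) ∈ H×Ĥ of P_{(ia),(jb)} equals the identity operator on M_n(ℂ), and for each fixed (j,b) the sum over all (i,a) ∈ H×Ĥ of P_{(ia),(jb)} equals the identity operator on M_n(ℂ). -/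
/-!
The Weyl matrices are unitary, and orthogonality of the characters of `H` makes them a complete
system: `B = ∑ (1/n) Tr(W_{jb} B) W_{jb}*` for every matrix `B` (`sum_trace_weyl_smul_star`);
taking adjoints gives the companion expansion in the `W_{ia}` (`sum_trace_star_weyl_smul`).

Each `W_{ia} U W_{jb}*` is unitary, hence a unit vector for the normalized trace inner product, so
`lineProj` of it is a rank-one orthogonal projection. For fixed `(i,a)` put `V = W_{ia} U`: since
left multiplication by `V` is an isometry, expanding `V* A` in the `W_{jb}*` and multiplying by `V`
shows that the projections onto the lines of `V W_{jb}*` sum to the identity. For fixed `(j,b)` the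
same works with right multiplication by `V = U W_{jb}*` and the expansion in the `W_{ia}`.
-/


open Matrix

/-- The Weyl matrix `W_{ia}` associated to a finite abelian group `H`: rows and columns are
indexed by the Pontryagin dual `Ĥ = AddChar H ℂ` (written additively), and it acts on the
standard basis by `W_{ia} e_b = ⟨i,b⟩ e_{a+b}`, where `⟨i,b⟩ = b i` is the Fourier coupling. -/
noncomputable def Weyl {H : Type*} [AddCommGroup H] [Fintype H] (i : H) (a : AddChar H ℂ) :
    Matrix (AddChar H ℂ) (AddChar H ℂ) ℂ :=
  Matrix.of fun r c => if r = a + c then c i else 0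

/-- The inner product `⟨x,·⟩ = tr(x* ·)` on `M_n(ℂ)` (normalized trace `tr = (1/n)·Tr`),
as a linear functional in its second variable. -/
noncomputable def matInnerL {H : Type*} [AddCommGroup H] [Fintype H]
    (x : Matrix (AddChar H ℂ) (AddChar H ℂ) ℂ) :
    Matrix (AddChar H ℂ) (AddChar H ℂ) ℂ →ₗ[ℂ] ℂ :=
  (Fintype.card H : ℂ)⁻¹ •
    (Matrix.traceLinearMap (AddChar H ℂ) ℂ ℂ ∘ₗ LinearMap.mulLeft ℂ xᴴ)

/-- The orthogonal projection of the Hilbert space `M_n(ℂ)` (with inner product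
`⟨x,y⟩ = tr(x* y)`) onto the complex line spanned by a unit vector `x`:
`A ↦ ⟨x,A⟩ • x`. -/
noncomputable def lineProj {H : Type*} [AddCommGroup H] [Fintype H]
    (x : Matrix (AddChar H ℂ) (AddChar H ℂ) ℂ) :
    Matrix (AddChar H ℂ) (AddChar H ℂ) ℂ →ₗ[ℂ] Matrix (AddChar H ℂ) (AddChar H ℂ) ℂ :=
  (matInnerL x).smulRight x

/-- Orthogonality of characters: `∑ j, s(j) * conj (r(j))` is `|H|` if `s = r` and `0` otherwise. -/
lemma sum_char_mul_star {H : Type*} [AddCommGroup H] [Fintype H] (s r : AddChar H ℂ) :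
    ∑ j : H, s j * star (r j) = if s = r then (Fintype.card H : ℂ) else 0 := by
  have h : ∀ j, s j * star (r j) = (s - r) j := fun j => by
    rw [AddChar.sub_apply, AddChar.map_neg_eq_conj]; rfl
  simp_rw [h]
  rw [AddChar.sum_eq_ite]
  simp [sub_eq_zero]

lemma trace_weyl_mul {H : Type*} [AddCommGroup H] [Fintype H] (j : H) (b : AddChar H ℂ)
    (B : Matrix (AddChar H ℂ) (AddChar H ℂ) ℂ) :
    (Weyl j b * B).trace = ∑ s, s j * B s (b + s) := by
  simp only [Matrix.trace, Matrix.diag, Matrix.mul_apply, Weyl, Matrix.of_apply, ite_mul, zero_mul]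
  rw [Finset.sum_comm]
  simp

/-- Completeness of the Weyl basis: every matrix is its own Fourier expansion in the adjoints
`W_{jb}*`. -/
lemma sum_trace_weyl_smul_star {H : Type*} [AddCommGroup H] [Fintype H]
    (B : Matrix (AddChar H ℂ) (AddChar H ℂ) ℂ) :
    ∑ p : H × AddChar H ℂ,
      ((Fintype.card H : ℂ)⁻¹ * (Weyl p.1 p.2 * B).trace) • (Weyl p.1 p.2)ᴴ = B := by
  ext r c
  have hb : ∀ b : AddChar H ℂ, c = b + r ↔ b = c - r := fun b => by
    rw [eq_comm, eq_sub_iff_add_eq]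
  rw [Matrix.sum_apply, Fintype.sum_prod_type]
  simp only [Matrix.smul_apply, Matrix.conjTranspose_apply, trace_weyl_mul]
  simp only [Weyl, Matrix.of_apply, smul_eq_mul, hb, apply_ite star, star_zero, mul_ite, mul_zero,
    Finset.sum_ite_eq', Finset.mem_univ, if_true]
  simp only [mul_assoc, ← Finset.mul_sum, Finset.sum_mul]
  rw [Finset.sum_comm]
  have h : ∀ s : AddChar H ℂ, ∑ j : H, s j * (B s (c - r + s) * star (r j)) =
      if s = r then (Fintype.card H : ℂ) * B s (c - r + s) else 0 := fun s => by
    rw [← zero_mul (B s (c - r + s)), ← ite_mul, ← sum_char_mul_star, Finset.sum_mul]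
    exact Finset.sum_congr rfl fun j _ => by ring
  simp only [h]
  simp

lemma sum_trace_star_weyl_smul {H : Type*} [AddCommGroup H] [Fintype H]
    (B : Matrix (AddChar H ℂ) (AddChar H ℂ) ℂ) :
    ∑ p : H × AddChar H ℂ,
      ((Fintype.card H : ℂ)⁻¹ * ((Weyl p.1 p.2)ᴴ * B).trace) • Weyl p.1 p.2 = B := by
  have h := congrArg Matrix.conjTranspose (sum_trace_weyl_smul_star Bᴴ)
  rw [Matrix.conjTranspose_sum, Matrix.conjTranspose_conjTranspose] at h
  refine Eq.trans (Finset.sum_congr rfl fun p _ => ?_) h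
  rw [Matrix.conjTranspose_smul, Matrix.conjTranspose_conjTranspose, star_mul', star_inv₀,
    star_natCast, ← Matrix.trace_conjTranspose, Matrix.conjTranspose_mul,
    Matrix.conjTranspose_conjTranspose, Matrix.trace_mul_comm]

lemma weyl_mem_unitaryGroup {H : Type*} [AddCommGroup H] [Fintype H] (i : H) (a : AddChar H ℂ) :
    Weyl i a ∈ Matrix.unitaryGroup (AddChar H ℂ) ℂ := by
  rw [Matrix.mem_unitaryGroup_iff', Matrix.star_eq_conjTranspose]
  ext r c
  have hr : star (r i) * r i = 1 := by
    rw [← starRingEnd_apply, ← AddChar.map_neg_eq_conj, ← AddChar.map_add_eq_mul, neg_add_cancel,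
      AddChar.map_zero_eq_one]
  by_cases h : r = c
  · subst h
    simpa [Matrix.mul_apply, Weyl, apply_ite] using hr
  · have h' : c ≠ r := Ne.symm h
    simp [Matrix.mul_apply, Weyl, apply_ite, h, h']

lemma lineProj_apply {H : Type*} [AddCommGroup H] [Fintype H]
    (x A : Matrix (AddChar H ℂ) (AddChar H ℂ) ℂ) :
    lineProj x A = ((Fintype.card H : ℂ)⁻¹ * (xᴴ * A).trace) • x := by
  simp [lineProj, matInnerL]

lemma matInnerL_apply {H : Type*} [AddCommGroup H] [Fintype H]
    (x A : Matrix (AddChar H ℂ) (AddChar H ℂ) ℂ) :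
    matInnerL x A = (Fintype.card H : ℂ)⁻¹ * (xᴴ * A).trace := by
  simp [matInnerL]

/-- A unitary matrix is a unit vector for the normalized trace inner product; this uses
`|Ĥ| = |H|`, since the normalization is by `|H|` while the matrices are indexed by `Ĥ`. -/
lemma matInnerL_self_of_unitary {H : Type*} [AddCommGroup H] [Fintype H]
    {x : Matrix (AddChar H ℂ) (AddChar H ℂ) ℂ} (hx : x ∈ Matrix.unitaryGroup (AddChar H ℂ) ℂ) :
    matInnerL x x = 1 := by
  rw [Matrix.mem_unitaryGroup_iff', Matrix.star_eq_conjTranspose] at hx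
  rw [matInnerL_apply, hx, Matrix.trace_one, AddChar.card_eq]
  exact inv_mul_cancel₀ (Nat.cast_ne_zero.2 Fintype.card_ne_zero)

lemma matInnerL_conj_symm {H : Type*} [AddCommGroup H] [Fintype H]
    (x y : Matrix (AddChar H ℂ) (AddChar H ℂ) ℂ) :
    star (matInnerL x y) = matInnerL y x := by
  rw [matInnerL_apply, matInnerL_apply, star_mul', star_inv₀, star_natCast,
    ← Matrix.trace_conjTranspose, Matrix.conjTranspose_mul, Matrix.conjTranspose_conjTranspose]

lemma lineProj_isProj {H : Type*} [AddCommGroup H] [Fintype H]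
    {x : Matrix (AddChar H ℂ) (AddChar H ℂ) ℂ} (hx : matInnerL x x = 1) :
    lineProj x ∘ₗ lineProj x = lineProj x ∧
      (∀ A B, matInnerL (lineProj x A) B = matInnerL A (lineProj x B)) ∧
      Module.finrank ℂ (LinearMap.range (lineProj x)) = 1 := by
  refine ⟨?_, fun A B => ?_, ?_⟩
  · ext1 A
    simp [lineProj, hx]
  · rw [← matInnerL_conj_symm]
    simp only [lineProj, LinearMap.smulRight_apply, map_smul, smul_eq_mul, star_mul',
      matInnerL_conj_symm]
    ring
  · have h0 : x ≠ 0 := by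
      rintro rfl
      simp at hx
    have hr : LinearMap.range (lineProj x) = Submodule.span ℂ {x} := by
      ext A
      rw [LinearMap.mem_range, Submodule.mem_span_singleton]
      constructor
      · rintro ⟨B, rfl⟩
        exact ⟨matInnerL x B, rfl⟩
      · rintro ⟨c, rfl⟩
        exact ⟨c • x, by simp [lineProj, hx]⟩
    rw [hr, finrank_span_singleton h0]

/-- For a unitary `U ∈ M_n(ℂ)`, the array `P_{(ia),(jb)}` of orthogonal projections onto the
lines `ℂ·W_{ia} U (W_{jb})*` is a magic unitary of rank-one projections: each `P_{(ia),(jb)}`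
is a rank-one orthogonal projection (idempotent and self-adjoint for `⟨x,y⟩ = tr(x* y)`, with
range of dimension one), and each row sum and each column sum equals the identity of the
endomorphisms of `M_n(ℂ)`. -/
theorem weyl_magic_unitary {H : Type*} [AddCommGroup H] [Fintype H]
    (U : Matrix (AddChar H ℂ) (AddChar H ℂ) ℂ) (hU : U ∈ Matrix.unitaryGroup (AddChar H ℂ) ℂ) :
    (∀ (i j : H) (a b : AddChar H ℂ),
      lineProj (Weyl i a * U * (Weyl j b)ᴴ) ∘ₗ lineProj (Weyl i a * U * (Weyl j b)ᴴ) =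
        lineProj (Weyl i a * U * (Weyl j b)ᴴ) ∧
      (∀ A B, matInnerL (lineProj (Weyl i a * U * (Weyl j b)ᴴ) A) B =
        matInnerL A (lineProj (Weyl i a * U * (Weyl j b)ᴴ) B)) ∧
      Module.finrank ℂ (LinearMap.range (lineProj (Weyl i a * U * (Weyl j b)ᴴ))) = 1) ∧
    (∀ (i : H) (a : AddChar H ℂ),
      ∑ p : H × AddChar H ℂ, lineProj (Weyl i a * U * (Weyl p.1 p.2)ᴴ) = LinearMap.id) ∧
    (∀ (j : H) (b : AddChar H ℂ),
      ∑ p : H × AddChar H ℂ, lineProj (Weyl p.1 p.2 * U * (Weyl j b)ᴴ) = LinearMap.id) := by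
  have hmem : ∀ (i j : H) (a b : AddChar H ℂ),
      Weyl i a * U * (Weyl j b)ᴴ ∈ Matrix.unitaryGroup (AddChar H ℂ) ℂ := fun i j a b =>
    mul_mem (mul_mem (weyl_mem_unitaryGroup i a) hU)
      (Unitary.star_mem (weyl_mem_unitaryGroup j b))
  refine ⟨fun i j a b => lineProj_isProj (matInnerL_self_of_unitary (hmem i j a b)),
    fun i a => ?_, fun j b => ?_⟩
  · have hV := mul_mem (weyl_mem_unitaryGroup i a) hU
    generalize Weyl i a * U = V at hV
    rw [Matrix.mem_unitaryGroup_iff, Matrix.star_eq_conjTranspose] at hV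
    ext1 A
    -- Expand `V* A` in the basis `W_{jb}*` and multiply by `V` on the left.
    have h := congrArg (V * ·) (sum_trace_weyl_smul_star (Vᴴ * A))
    simp only [← Matrix.mul_assoc, hV, Matrix.one_mul, Finset.mul_sum, Matrix.mul_smul] at h
    simpa [LinearMap.sum_apply, lineProj_apply, Matrix.conjTranspose_mul] using h
  · have hV := mul_mem hU (Unitary.star_mem (weyl_mem_unitaryGroup j b))
    simp only [Matrix.mul_assoc]
    rw [Matrix.star_eq_conjTranspose] at hV
    generalize U * (Weyl j b)ᴴ = V at hV
    rw [Matrix.mem_unitaryGroup_iff', Matrix.star_eq_conjTranspose] at hV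
    ext1 A
    -- Expand `A V*` in the basis `W_{ia}` and multiply by `V` on the right; the coefficients
    -- match by cyclicity of the trace.
    have h := congrArg (· * V) (sum_trace_star_weyl_smul (A * Vᴴ))
    simp only [Matrix.mul_assoc, hV, Matrix.mul_one, Finset.sum_mul, Matrix.smul_mul] at h
    rw [LinearMap.sum_apply, LinearMap.id_apply]
    refine Eq.trans (Finset.sum_congr rfl fun p _ => ?_) h
    rw [lineProj_apply, Matrix.conjTranspose_mul, Matrix.mul_assoc, Matrix.trace_mul_comm,
      Matrix.mul_assoc]
end

section
/- Let N ≥ 1, let H be a compact subgroup of the unitary group U_N of M_N(ℂ) which is self-conjugate, i.e. closed under entrywise complex conjugation (v ∈ H implies v̄ ∈ H), and equip H with its Haar probability measure. For even p = 2m, define the real matrix T_p, with rows and columns indexed by {1,…,N}^p, by (T_p)_{(i₁,…,i_p),(j₁,…,j_p)} = ∫_H Re( v_{i₁j₁} · conj(v_{i₂j₂}) · v_{i₃j₃} · conj(v_{i₄j₄}) ⋯ v_{i_{p−1}j_{p−1}} · conj(v_{i_pj_p}) ) dv. Then T_p is idempotent: T_p · T_p = T_p. -/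
/-!
The integrand is the real part of the entry `F(v)_{ij}` of a tensor product of copies of `v` and
of its conjugate. Such tensor products are multiplicative in `v` (`halfClassicalEntry_mul`), and
conjugating `v` conjugates `F(v)`. As `Re a * Re b = (Re (a * b) + Re (conj a * b)) / 2`, the matrix
product of the real parts satisfies `Re F(v) * Re F(w) = (Re F(v w) + Re F(conj v * w)) / 2`.
Integrating over `w`, left invariance of the Haar measure turns both terms on the right into `T_p`,
so `Re F(v) * T_p = T_p` for every `v`; integrating over `v` gives the claim.
-/

open Matrix MeasureTheory
open scoped ComplexConjugate

/-- The real matrix `T_p` (for `p = 2m` even) of the `2×2` antidiagonal matrix model of a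
half-classical quantum group over a subgroup `G ⊆ U_N` equipped with a measure `μ`:
rows and columns are indexed by `{0,…,N-1}^p`, and
`(T_p)_{i,j} = ∫_G Re(v_{i₁j₁}·conj(v_{i₂j₂})·v_{i₃j₃}·conj(v_{i₄j₄}) ⋯ conj(v_{i_pj_p})) dv`. -/
noncomputable def halfClassicalTp (N : ℕ) (G : Subgroup (Matrix.unitaryGroup (Fin N) ℂ))
    [MeasurableSpace G] (μ : Measure G) (m : ℕ) :
    Matrix (Fin (2 * m) → Fin N) (Fin (2 * m) → Fin N) ℝ :=
  Matrix.of fun i j =>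
    ∫ v : G, (∏ k : Fin (2 * m),
      if (k : ℕ) % 2 = 0 then v.1.1 (i k) (j k) else conj (v.1.1 (i k) (j k))).re ∂μ

/-- The `(i, j)` entry of the tensor product `v ⊗ conj v ⊗ v ⊗ ⋯` with `p` factors. -/
noncomputable def halfClassicalEntry {N p : ℕ} (v : Matrix (Fin N) (Fin N) ℂ)
    (i j : Fin p → Fin N) : ℂ :=
  ∏ k : Fin p, if (k : ℕ) % 2 = 0 then v (i k) (j k) else conj (v (i k) (j k))

/-- The alternating tensor product is multiplicative. -/
lemma halfClassicalEntry_mul {N p : ℕ} (v w : Matrix (Fin N) (Fin N) ℂ)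
    (i l : Fin p → Fin N) :
    halfClassicalEntry (v * w) i l =
      ∑ j, halfClassicalEntry v i j * halfClassicalEntry w j l := by
  unfold halfClassicalEntry
  simp_rw [← Finset.prod_mul_distrib]
  rw [← Fintype.prod_sum (fun (k : Fin p) (x : Fin N) =>
    (if (k : ℕ) % 2 = 0 then v (i k) x else conj (v (i k) x)) *
      (if (k : ℕ) % 2 = 0 then w x (l k) else conj (w x (l k))))]
  refine Finset.prod_congr rfl fun k _ => ?_
  split_ifs <;> simp [Matrix.mul_apply]

lemma halfClassicalEntry_conj {N p : ℕ} (v : Matrix (Fin N) (Fin N) ℂ)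
    (i j : Fin p → Fin N) :
    halfClassicalEntry (v.map (starRingEnd ℂ)) i j = conj (halfClassicalEntry v i j) := by
  unfold halfClassicalEntry
  rw [map_prod]
  refine Finset.prod_congr rfl fun k _ => ?_
  split_ifs <;> simp

/-- Multiplicativity combined with `Re a * Re b = (Re (a * b) + Re (conj a * b)) / 2`; the conjugated
term is again of the form `F(u * w)`, with `u = conj v`. -/
lemma sum_re_halfClassicalEntry_mul {N p : ℕ} (v w : Matrix (Fin N) (Fin N) ℂ)
    (i l : Fin p → Fin N) :
    ∑ j, (halfClassicalEntry v i j).re * (halfClassicalEntry w j l).re =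
      ((halfClassicalEntry (v * w) i l).re +
        (halfClassicalEntry (v.map (starRingEnd ℂ) * w) i l).re) / 2 := by
  rw [halfClassicalEntry_mul, halfClassicalEntry_mul, Complex.re_sum, Complex.re_sum,
    ← Finset.sum_add_distrib, Finset.sum_div]
  refine Finset.sum_congr rfl fun j _ => ?_
  rw [halfClassicalEntry_conj]
  simp only [Complex.mul_re, Complex.conj_re, Complex.conj_im]
  ring

lemma continuous_halfClassicalEntry {N p : ℕ} (i j : Fin p → Fin N) :
    Continuous fun v : Matrix (Fin N) (Fin N) ℂ => halfClassicalEntry v i j := by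
  unfold halfClassicalEntry
  refine continuous_finsetProd _ fun k _ => ?_
  split_ifs
  · exact continuous_id.matrix_elem _ _
  · exact Complex.continuous_conj.comp (continuous_id.matrix_elem _ _)

/-- Let `N ≥ 1` and let `G ⊆ U_N` be a compact subgroup which is self-conjugate (closed
under entrywise complex conjugation), equipped with its Haar probability measure. Then for
every even `p = 2m` the real matrix `T_p` defined above is idempotent: `T_p · T_p = T_p`.
(This is the key computation proving stationarity of the `2×2` antidiagonal model of a
half-classical quantum group `G ⊆ O_N^*`.) -/
theorem halfClassicalTp_idempotent (N : ℕ) (hN : 1 ≤ N)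
    (G : Subgroup (Matrix.unitaryGroup (Fin N) ℂ)) [CompactSpace G]
    [MeasurableSpace G] [BorelSpace G]
    (hconj : ∀ g : G, ∃ h : G, h.1.1 = g.1.1.map (starRingEnd ℂ))
    (μ : Measure G) [μ.IsHaarMeasure] [IsProbabilityMeasure μ] (m : ℕ) :
    halfClassicalTp N G μ m * halfClassicalTp N G μ m = halfClassicalTp N G μ m := by
  have hcont (i j : Fin (2 * m) → Fin N) :
      Continuous fun v : G => (halfClassicalEntry v.1.1 i j).re :=
    Complex.continuous_re.comp ((continuous_halfClassicalEntry i j).comp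
      (continuous_subtype_val.comp continuous_subtype_val))
  have hint (i j : Fin (2 * m) → Fin N) :
      Integrable (fun v : G => (halfClassicalEntry v.1.1 i j).re) μ :=
    (hcont i j).integrable_of_hasCompactSupport (HasCompactSupport.of_compactSpace _)
  have hT (i j : Fin (2 * m) → Fin N) : halfClassicalTp N G μ m i j =
      ∫ v : G, (halfClassicalEntry v.1.1 i j).re ∂μ := rfl
  have hinv (g : G) (i l : Fin (2 * m) → Fin N) :
      ∫ w : G, (halfClassicalEntry (g.1.1 * w.1.1) i l).re ∂μ =
        ∫ w : G, (halfClassicalEntry w.1.1 i l).re ∂μ :=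
    integral_mul_left_eq_self (fun w : G => (halfClassicalEntry w.1.1 i l).re) g
  have hint' (g : G) (i l : Fin (2 * m) → Fin N) :
      Integrable (fun w : G => (halfClassicalEntry (g.1.1 * w.1.1) i l).re) μ :=
    (hint i l).comp_mul_left g
  have hfix (v : G) (i l : Fin (2 * m) → Fin N) :
      ∑ j, (halfClassicalEntry v.1.1 i j).re * halfClassicalTp N G μ m j l =
        halfClassicalTp N G μ m i l := by
    obtain ⟨u, hu⟩ := hconj v
    simp_rw [hT, ← integral_const_mul]
    rw [← integral_finsetSum _ fun j _ => (hint j l).const_mul _]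
    simp_rw [sum_re_halfClassicalEntry_mul, ← hu]
    rw [integral_div, integral_add (hint' v i l) (hint' u i l), hinv, hinv]
    ring
  ext i l
  rw [Matrix.mul_apply]
  calc ∑ j, halfClassicalTp N G μ m i j * halfClassicalTp N G μ m j l
      = ∫ v : G, ∑ j, (halfClassicalEntry v.1.1 i j).re * halfClassicalTp N G μ m j l ∂μ := by
        rw [integral_finsetSum _ fun j _ => (hint i j).mul_const _]
        simp_rw [integral_mul_const, ← hT]
    _ = halfClassicalTp N G μ m i l := by
        simp_rw [hfix]
        simp
end

section
/- Let (u_{ij})_{1≤i,j≤N} be a flat magic unitary over M_N(ℂ) whose entries pairwise commute: each u_{ij} ∈ M_N(ℂ) is a rank-one orthogonal projection (u_{ij} = u_{ij}² = u_{ij}*), each row sum Σ_j u_{ij} and each column sum Σ_i u_{ij} equals the identity matrix, and u_{ij}·u_{kl} = u_{kl}·u_{ij} for all i,j,k,l. Then there exists a unique Latin square L ∈ M_N({1,…,N}) with first row L_{1j} = j for all j, such that u_{ij} = u_{1, L_{ij}} for all i, j; in particular, setting p_k = u_{1k}, the p₁,…,p_N are pairwise orthogonal rank-one projections summing to the identity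 and u_{ij} = p_{L_{ij}}. -/
/-!
Commuting self-adjoint idempotents that sum to the identity are pairwise orthogonal
(`orthogonal_of_sum_eq_one`): for fixed `k` the products `p k * p l` with `l ≠ k` are themselves
self-adjoint idempotents summing to zero, so their traces, which are squared Hilbert–Schmidt
norms, all vanish. Two commuting rank-one idempotents with nonzero product coincide
(`eq_of_mul_ne_zero`), because both have the range of the product as their range.

Since the first row sums to the identity, every `u i j` has a nonzero product with some `u 0 k`,
hence equals it, and `L i j` is defined to be that `k`. Orthogonality and nonvanishing make the
entries of any one row or column distinct, which gives the Latin property and the uniqueness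
of `L`.
-/

open Matrix

theorem orthogonal_of_sum_eq_one {N : ℕ} (p : Fin N → Matrix (Fin N) (Fin N) ℂ)
    (hsa : ∀ k, (p k)ᴴ = p k) (hidem : ∀ k, p k * p k = p k) (hsum : ∑ k, p k = 1)
    (hcomm : ∀ k l, p k * p l = p l * p k) {k l : Fin N} (hkl : k ≠ l) :
    p k * p l = 0 := by
  open scoped ComplexOrder in
  have hA : ∀ l, (p k * p l)ᴴ * (p k * p l) = p k * p l := fun l => by
    rw [conjTranspose_mul, hsa, hsa, ← hcomm k l, Matrix.mul_assoc, ← Matrix.mul_assoc (p l),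
      ← hcomm k l, Matrix.mul_assoc, hidem, ← Matrix.mul_assoc, hidem]
  have hzero : ∑ l ∈ Finset.univ.erase k, p k * p l = 0 := by
    have h := Finset.add_sum_erase Finset.univ (fun l => p k * p l) (Finset.mem_univ k)
    simp only [hidem] at h
    rw [← Finset.mul_sum Finset.univ, hsum, Matrix.mul_one] at h
    simpa using h
  have htr : ∑ l ∈ Finset.univ.erase k, (p k * p l).trace = 0 := by
    rw [← Matrix.trace_sum, hzero, Matrix.trace_zero]
  have hnonneg : ∀ l ∈ Finset.univ.erase k, 0 ≤ (p k * p l).trace := fun l _ => by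
    rw [← hA l]
    exact (Matrix.posSemidef_conjTranspose_mul_self _).trace_nonneg
  have h0 := (Finset.sum_eq_zero_iff_of_nonneg hnonneg).1 htr l (by simp [hkl.symm])
  rw [← hA l] at h0
  exact Matrix.trace_conjTranspose_mul_self_eq_zero_iff.1 h0

theorem ne_zero_of_rank_eq_one {N : ℕ} {e : Matrix (Fin N) (Fin N) ℂ} (h : e.rank = 1) :
    e ≠ 0 := by
  rintro rfl
  simp at h

/-- A nonzero left multiple `f * e = e * f` has the same range as `e`, and `f` fixes that range
pointwise. -/
theorem mul_eq_self_of_mul_ne_zero {N : ℕ} {e f : Matrix (Fin N) (Fin N) ℂ}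
    (he : e.rank = 1) (hf : f * f = f) (hcomm : e * f = f * e) (hne : e * f ≠ 0) :
    f * e = e := by
  have hle : LinearMap.range (e * f).mulVecLin ≤ LinearMap.range e.mulVecLin := by
    rw [Matrix.mulVecLin_mul]
    exact LinearMap.range_comp_le_range _ _
  have hpos : (e * f).rank ≠ 0 := fun h => by
    have h0 := LinearMap.range_eq_bot.1 (Submodule.finrank_eq_zero.1 h)
    refine hne (Matrix.ext_of_mulVec_single fun i => ?_)
    rw [← Matrix.mulVecLin_apply, h0, Matrix.zero_mulVec, LinearMap.zero_apply]
  have hrange : LinearMap.range (e * f).mulVecLin = LinearMap.range e.mulVecLin := by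
    refine Submodule.eq_of_le_of_finrank_le hle ?_
    change e.rank ≤ (e * f).rank
    omega
  refine Matrix.ext_of_mulVec_single fun i => ?_
  obtain ⟨y, hy⟩ : e *ᵥ Pi.single i 1 ∈ LinearMap.range (e * f).mulVecLin := by
    rw [hrange]
    exact ⟨_, rfl⟩
  rw [Matrix.mulVecLin_apply] at hy
  rw [← Matrix.mulVec_mulVec, ← hy, Matrix.mulVec_mulVec, hcomm, ← Matrix.mul_assoc, hf]

theorem eq_of_mul_ne_zero {N : ℕ} {e f : Matrix (Fin N) (Fin N) ℂ}
    (he : e.rank = 1) (hf : f.rank = 1) (hee : e * e = e) (hff : f * f = f)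
    (hcomm : e * f = f * e) (hne : e * f ≠ 0) : e = f := by
  rw [← mul_eq_self_of_mul_ne_zero he hff hcomm hne, ← hcomm,
    mul_eq_self_of_mul_ne_zero hf hee hcomm.symm (hcomm ▸ hne)]

theorem injective_of_sum_eq_one {N : ℕ} (p : Fin N → Matrix (Fin N) (Fin N) ℂ)
    (hsa : ∀ k, (p k)ᴴ = p k) (hidem : ∀ k, p k * p k = p k) (hrank : ∀ k, (p k).rank = 1)
    (hsum : ∑ k, p k = 1) (hcomm : ∀ k l, p k * p l = p l * p k) :
    Function.Injective p := by
  intro k l h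
  by_contra hkl
  have h0 := orthogonal_of_sum_eq_one p hsa hidem hsum hcomm hkl
  rw [← h, hidem] at h0
  exact ne_zero_of_rank_eq_one (hrank k) h0



/-- Let `(u_{ij})` be a flat magic unitary over `M_N(ℂ)` with pairwise commuting entries:
each `u i j` is a rank-one orthogonal projection, each row and each column sums to the
identity matrix, and all entries commute. Then there is a unique Latin square
`L ∈ M_N({0,…,N-1})` (each row and column of `L` is a bijection) whose first row is the
identity (`L 0 j = j`) such that `u i j = u 0 (L i j)` for all `i, j`; in particular the
projections `p k = u 0 k` are pairwise orthogonal rank-one projections summing to the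
identity, and `u i j = p (L i j)`. -/
theorem commuting_flat_magic_unitary_eq_latin_square (N : ℕ) [NeZero N]
    (u : Fin N → Fin N → Matrix (Fin N) (Fin N) ℂ)
    (hsa : ∀ i j, (u i j)ᴴ = u i j) (hidem : ∀ i j, u i j * u i j = u i j)
    (hrank : ∀ i j, (u i j).rank = 1)
    (hrow : ∀ i, ∑ j, u i j = 1) (hcol : ∀ j, ∑ i, u i j = 1)
    (hcomm : ∀ i j k l, u i j * u k l = u k l * u i j) :
    (∃! L : Fin N → Fin N → Fin N,
      ((∀ i, Function.Bijective (L i)) ∧ (∀ j, Function.Bijective fun i => L i j) ∧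
        (∀ j, L 0 j = j)) ∧
      ∀ i j, u i j = u 0 (L i j)) ∧
    ∀ k l, k ≠ l → u 0 k * u 0 l = 0 := by
  have hinj_row : ∀ i, Function.Injective (u i) := fun i =>
    injective_of_sum_eq_one (u i) (hsa i) (hidem i) (hrank i) (hrow i) fun k l => hcomm i k i l
  have hinj_col : ∀ j, Function.Injective fun i => u i j := fun j =>
    injective_of_sum_eq_one (fun i => u i j) (fun i => hsa i j) (fun i => hidem i j)
      (fun i => hrank i j) (hcol j) fun k l => hcomm k j l j
  have hex : ∀ i j, ∃ k, u i j = u 0 k := fun i j => by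
    by_contra! h
    have hz : ∀ k, u i j * u 0 k = 0 := fun k => by
      by_contra hne
      exact h k (eq_of_mul_ne_zero (hrank i j) (hrank 0 k) (hidem i j) (hidem 0 k)
        (hcomm i j 0 k) hne)
    apply ne_zero_of_rank_eq_one (hrank i j)
    rw [← Matrix.mul_one (u i j), ← hrow 0, Finset.mul_sum]
    exact Finset.sum_eq_zero fun k _ => hz k
  choose L hL using hex
  refine ⟨⟨L, ⟨⟨fun i => ?_, fun j => ?_, fun j => ?_⟩, hL⟩, ?_⟩, fun k l hkl => ?_⟩
  · refine Finite.injective_iff_bijective.1 fun j j' h => hinj_row i ?_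
    rw [hL i j, hL i j', h]
  · refine Finite.injective_iff_bijective.1 fun i i' h => hinj_col j ?_
    change L i j = L i' j at h
    change u i j = u i' j
    rw [hL i j, hL i' j, h]
  · exact hinj_row 0 (hL 0 j).symm
  · rintro L' ⟨-, hL'⟩
    funext i j
    exact hinj_row 0 ((hL' i j).symm.trans (hL i j))
  · exact orthogonal_of_sum_eq_one (u 0) (hsa 0) (hidem 0) (hrow 0)
      (fun k l => hcomm 0 k 0 l) hkl
end

section
/- Let p₁,…,p_N ∈ M_N(ℂ) be pairwise orthogonal rank-one orthogonal projections with p₁ + ⋯ + p_N = 1, and let L_N denote the (finite, nonempty) set of half-normalized Latin squares of order N. Then for every r ≥ 1 and all indices i₁,…,i_r, j₁,…,j_r ∈ {1,…,N}: (1/(N·|L_N|)) · Σ_{L ∈ L_N} Tr( p_{L_{i₁j₁}} · p_{L_{i₂j₂}} ⋯ p_{L_{i_rj_r}} ) = (1/N!) · #{ σ ∈ S_N : σ(j_k) = i_k for all k = 1,…,r }, where Tr is the unnormalized trace on M_N(ℂ) and S_N is the symmetric group on {1,…,N}. -/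
/-!
Since the projections are pairwise orthogonal idempotents of trace one, a nonempty product
`p a₁ ⋯ p a_r` has trace `1` if all `a_k` agree and `0` otherwise. Hence the left-hand sum counts
the pairs `(L, x)` such that every cell `(i_k, j_k)` of `L` contains the symbol `x`.

The cells of a Latin square `L` containing `x` form the graph of a permutation `σ_{L,x}`, sending
a column `j` to the row in which `x` occurs, so that the count is the number of pairs with
`σ_{L,x} (j_k) = i_k` for all `k`. It remains to see that `(L, x) ↦ σ_{L,x}` is equidistributed
over `S_N`. For a permutation `ρ`, moving the columns of `L` by `ρ` and relabelling the symbols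
by `ρ` preserves half-normalized Latin squares and sends `σ_{L,x}` to `σ_{L,x} ∘ ρ⁻¹`; as right
multiplication is transitive on `S_N`, all fibres have the same cardinality `N · |L_N| / N!`.
Finally, `L_N` is nonempty because it contains the addition table of `ℤ/N`.
-/

open Matrix

/-- A half-normalized Latin square of order `N`: a matrix `L ∈ M_N({0,…,N-1})` each of whose
rows and columns is a permutation of `0,…,N-1`, and whose first row is `(0,1,…,N-1)`. -/
def IsHNLatinSquare {N : ℕ} [NeZero N] (L : Fin N → Fin N → Fin N) : Prop :=
  (∀ i, Function.Bijective (L i)) ∧ (∀ j, Function.Bijective fun i => L i j) ∧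
    ∀ j, L 0 j = j

section Projections

variable {N : ℕ} {p : Fin N → Matrix (Fin N) (Fin N) ℂ}

lemma trace_eq_one_of_idem_of_rank {A : Matrix (Fin N) (Fin N) ℂ} (hA : A * A = A)
    (hr : A.rank = 1) : A.trace = 1 := by
  have hidem : IsIdempotentElem A.toLin' := by
    change A.toLin' * A.toLin' = A.toLin'
    rw [Module.End.mul_eq_comp, ← Matrix.toLin'_mul, hA]
  have h := (LinearMap.IsIdempotentElem.isProj_range _ hidem).trace
  rw [Matrix.trace_toLin'_eq] at h
  rw [h, ← Matrix.toLin_eq_toLin', ← Matrix.rank_eq_finrank_range_toLin, hr, Nat.cast_one]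

lemma prod_map_cons_proj (hidem : ∀ k, p k * p k = p k)
    (horth : ∀ k l, k ≠ l → p k * p l = 0) (a : Fin N) (l : List (Fin N)) :
    ((a :: l).map p).prod = if ∀ y ∈ l, y = a then p a else 0 := by
  induction l generalizing a with
  | nil => simp
  | cons b l ih =>
    rw [List.map_cons, List.prod_cons, ih b]
    by_cases hab : b = a
    · subst hab
      simp [hidem]
    · simp [hab, horth a b (Ne.symm hab)]

open scoped Classical in
/-- The number on the right is `1` or `0`, as the values of `f` agree or not; this uses `1 ≤ r`. -/
lemma trace_prod_ofFn_proj (hidem : ∀ k, p k * p k = p k) (hrank : ∀ k, (p k).rank = 1)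
    (horth : ∀ k l, k ≠ l → p k * p l = 0) {r : ℕ} (hr : 1 ≤ r) (f : Fin r → Fin N) :
    ((List.ofFn fun k => p (f k)).prod).trace =
      ((Finset.univ.filter fun x => ∀ k, f k = x).card : ℂ) := by
  obtain ⟨r, rfl⟩ : ∃ s, r = s + 1 := ⟨r - 1, by omega⟩
  have h : (List.ofFn fun k => p (f k)) = ((f 0 :: List.ofFn fun k : Fin r => f k.succ).map p) := by
    simp [List.ofFn_succ, List.map_ofFn, Function.comp_def]
  rw [h, prod_map_cons_proj hidem horth]
  by_cases hc : ∀ k, f k = f 0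
  · have h1 : (Finset.univ.filter fun x => ∀ k, f k = x) = {f 0} := by
      ext x
      simp only [Finset.mem_filter, Finset.mem_univ, true_and, Finset.mem_singleton]
      exact ⟨fun hx => (hx 0).symm, fun hx k => (hc k).trans hx.symm⟩
    rw [h1, if_pos (by simp [hc]), trace_eq_one_of_idem_of_rank (hidem _) (hrank _)]
    simp
  · have h1 : (Finset.univ.filter fun x => ∀ k, f k = x) = ∅ := by
      ext x
      simp only [Finset.mem_filter, Finset.mem_univ, true_and, Finset.notMem_empty, iff_false]
      exact fun hx => hc fun k => (hx k).trans (hx 0).symm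
    rw [h1, if_neg]
    · simp
    · intro hl
      refine hc fun k => ?_
      induction k using Fin.cases with
      | zero => rfl
      | succ k => exact hl _ (by simp [List.mem_ofFn])

end Projections

section LatinSquares

variable {N : ℕ} [NeZero N]

/-- The permutation `σ_{L,x}` attached to a Latin square `L` and a symbol `x`: it sends a column
`j` to the unique row `i` with `L i j = x`. -/
noncomputable def symbolPerm (q : {L : Fin N → Fin N → Fin N // IsHNLatinSquare L} × Fin N) :
    Equiv.Perm (Fin N) :=
  Equiv.ofBijective (fun j => (Equiv.ofBijective _ (q.1.2.2.1 j)).symm q.2) <| by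
    refine Finite.injective_iff_bijective.1 fun j j' h => ?_
    have e := fun j => (Equiv.ofBijective _ (q.1.2.2.1 j)).apply_symm_apply q.2
    have e1 := e j
    have e2 := e j'
    rw [← h] at e2
    exact (q.1.2.1 _).1 (e1.trans e2.symm)

lemma symbolPerm_eq_iff (q : {L : Fin N → Fin N → Fin N // IsHNLatinSquare L} × Fin N)
    (i j : Fin N) : symbolPerm q j = i ↔ q.1.1 i j = q.2 := by
  rw [symbolPerm, Equiv.ofBijective_apply, Equiv.symm_apply_eq, eq_comm]
  rfl

/-- The action of `ρ` on pairs (half-normalized Latin square, symbol): the columns are moved and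
the symbols relabelled by the same permutation, which preserves the normalization of the first
row. -/
def recolor (ρ : Equiv.Perm (Fin N))
    (q : {L : Fin N → Fin N → Fin N // IsHNLatinSquare L} × Fin N) :
    {L : Fin N → Fin N → Fin N // IsHNLatinSquare L} × Fin N :=
  (⟨fun i j => ρ (q.1.1 i (ρ.symm j)),
    fun i => ρ.bijective.comp ((q.1.2.1 i).comp ρ.symm.bijective),
    fun j => ρ.bijective.comp (q.1.2.2.1 (ρ.symm j)),
    fun j => by simp [q.1.2.2.2]⟩, ρ q.2)

lemma recolor_injective (ρ : Equiv.Perm (Fin N)) : Function.Injective (recolor ρ) := by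
  rintro ⟨⟨L, hL⟩, x⟩ ⟨⟨L', hL'⟩, x'⟩ h
  obtain ⟨h1, h2⟩ := Prod.ext_iff.1 h
  obtain rfl : x = x' := ρ.injective h2
  have h3 : (fun i j => ρ (L i (ρ.symm j))) = fun i j => ρ (L' i (ρ.symm j)) :=
    congrArg Subtype.val h1
  have : L = L' := by
    funext i j
    simpa using congrFun (congrFun h3 i) (ρ j)
  subst this
  rfl

lemma symbolPerm_recolor (ρ : Equiv.Perm (Fin N))
    (q : {L : Fin N → Fin N → Fin N // IsHNLatinSquare L} × Fin N) :
    symbolPerm (recolor ρ q) = symbolPerm q * ρ⁻¹ := by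
  ext1 j
  rw [symbolPerm_eq_iff, Equiv.Perm.mul_apply]
  exact congrArg ρ ((symbolPerm_eq_iff q _ _).1 rfl)

open scoped Classical in
lemma card_fiber_symbolPerm_le (σ τ : Equiv.Perm (Fin N)) :
    (Finset.univ.filter fun q => symbolPerm q = σ).card ≤
      (Finset.univ.filter fun q => symbolPerm q = τ).card := by
  refine Finset.card_le_card_of_injOn (recolor (τ⁻¹ * σ)) ?_ (recolor_injective _).injOn
  intro q hq
  simp only [Finset.coe_filter, Finset.mem_univ, true_and, Set.mem_ofPred_eq] at hq ⊢
  rw [symbolPerm_recolor, hq]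
  group

open scoped Classical in
/-- Equidistribution of `σ_{L,x}`, in the form: the number of pairs with `σ_{L,x}` in a set of
permutations is proportional to the size of the set. -/
lemma card_symbolPerm_filter (P : Equiv.Perm (Fin N) → Prop) [DecidablePred P] :
    (Finset.univ.filter fun q => P (symbolPerm (N := N) q)).card =
      (Finset.univ.filter P).card *
        (Finset.univ.filter fun q => symbolPerm (N := N) q = 1).card := by
  rw [Finset.card_eq_sum_card_fiberwise (f := symbolPerm) (t := Finset.univ.filter P)
    (fun q hq => by simpa using hq)]
  rw [← smul_eq_mul, ← Finset.sum_const]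
  refine Finset.sum_congr rfl fun σ hσ => ?_
  rw [← le_antisymm (card_fiber_symbolPerm_le σ 1) (card_fiber_symbolPerm_le 1 σ)]
  congr 1
  ext q
  simp only [Finset.mem_filter, Finset.mem_univ, true_and] at hσ ⊢
  exact ⟨fun h => h.2, fun h => ⟨h ▸ hσ, h⟩⟩

lemma isHNLatinSquare_add : IsHNLatinSquare fun i j : Fin N => i + j := by
  let _ := Fin.addCommGroup N
  exact ⟨fun i => (Equiv.addLeft i).bijective, fun j => (Equiv.addRight j).bijective,
    fun j => zero_add j⟩

end LatinSquares

open scoped Classical in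
/-- Let `p 0, …, p (N-1) ∈ M_N(ℂ)` be pairwise orthogonal rank-one orthogonal projections
summing to the identity, and let `L_N` be the set of half-normalized Latin squares of order
`N`. Then for every `r ≥ 1` and all multi-indices `i, j : Fin r → Fin N`:
`(1/(N·|L_N|)) · Σ_{L ∈ L_N} Tr(p_{L_{i₁j₁}} ⋯ p_{L_{i_rj_r}})
   = (1/N!) · #{σ ∈ S_N : σ(j_k) = i_k for all k}`.
(This is the stationarity of the fiber `π^u : C(S_N) → M_N(C(L_N))` of the universal flat
model of `C(S_N)`.) -/
theorem latin_square_fiber_stationary (N : ℕ) [NeZero N]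
    (p : Fin N → Matrix (Fin N) (Fin N) ℂ)
    (hsa : ∀ k, (p k)ᴴ = p k) (hidem : ∀ k, p k * p k = p k)
    (hrank : ∀ k, (p k).rank = 1)
    (horth : ∀ k l, k ≠ l → p k * p l = 0) (hsum : ∑ k, p k = 1)
    (r : ℕ) (hr : 1 ≤ r) (i j : Fin r → Fin N) :
    ((N : ℂ) * (Finset.univ.filter fun L : Fin N → Fin N → Fin N => IsHNLatinSquare L).card)⁻¹ *
      ∑ L ∈ Finset.univ.filter fun L : Fin N → Fin N → Fin N => IsHNLatinSquare L,
        ((List.ofFn fun k : Fin r => p (L (i k) (j k))).prod).trace =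
    ((N.factorial : ℂ))⁻¹ *
      (Finset.univ.filter fun σ : Equiv.Perm (Fin N) => ∀ k, σ (j k) = i k).card := by
  set H := Finset.univ.filter fun L : Fin N → Fin N → Fin N => IsHNLatinSquare L with hH
  have hcard : Fintype.card {L : Fin N → Fin N → Fin N // IsHNLatinSquare L} = H.card :=
    Fintype.card_subtype _
  have hpos : H.card ≠ 0 :=
    Finset.card_ne_zero.2 ⟨_, Finset.mem_filter.2 ⟨Finset.mem_univ _, isHNLatinSquare_add⟩⟩
  have hsumL : ∑ L ∈ H, ((List.ofFn fun k : Fin r => p (L (i k) (j k))).prod).trace =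
      ((Finset.univ.filter fun q => ∀ k, symbolPerm (N := N) q (j k) = i k).card : ℂ) := by
    simp_rw [trace_prod_ofFn_proj hidem hrank horth hr, symbolPerm_eq_iff]
    rw [Finset.sum_subtype H (p := IsHNLatinSquare) (by simp [hH]), ← Nat.cast_sum]
    simp_rw [Finset.card_filter]
    rw [Fintype.sum_prod_type]
  have htot : H.card * N =
      N.factorial * (Finset.univ.filter fun q => symbolPerm (N := N) q = 1).card := by
    have h := card_symbolPerm_filter (N := N) fun _ => True
    simpa [Fintype.card_prod, hcard, Fintype.card_perm] using h
  rw [hsumL, card_symbolPerm_filter fun σ => ∀ k, σ (j k) = i k]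
  have hN : (N : ℂ) ≠ 0 := Nat.cast_ne_zero.2 (NeZero.ne N)
  have hH0 : (H.card : ℂ) ≠ 0 := Nat.cast_ne_zero.2 hpos
  have hf : (N.factorial : ℂ) ≠ 0 := Nat.cast_ne_zero.2 N.factorial_ne_zero
  have htot' := congrArg (Nat.cast (R := ℂ)) htot
  push_cast at htot' ⊢
  rw [inv_mul_eq_div, inv_mul_eq_div, div_eq_div_iff (mul_ne_zero hN hH0) hf]
  linear_combination -(Finset.univ.filter fun σ : Equiv.Perm (Fin N) =>
    ∀ k, σ (j k) = i k).card * htot'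
end
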